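/- arXiv:2603.12019 — 3 statements merged into one kernel-verified Lean document; each statement's English description precedes it below -/
import Mathlib

section
/- Recovery formulas for the Clebsch–Gordan harmonic decomposition: suppose C ∈ Ela equals the Clebsch–Gordan combination of (α, β, hᵃ, hᵇ, H) with α, β ∈ ℝ, hᵃ, hᵇ ∈ H², H ∈ H⁴. Let C^dd be the tensor with components C^dd_ijkl = ∑_{p,q,r,s} J_ijpq C_pqrs J_rskl. Then α = (1/5) ∑_{i,j,k,l} C^dd_ijkl J_ijkl, β = (1/3) ∑_{i,k} C_iikk, hᵃ_jl = ∑_i C^dd_ijil − (1/3) δ_jl ∑_{i,p} C^dd_ipip, hᵇ_ij = ∑_k C_ijkk − (1/3) δ_ij ∑_{p,k} C_ppkk, and H_ijkl = C^dd_ijkl − (hᵃ ⊠ 1)_ijkl − α J_ijkl. -/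
open scoped BigOperators

/-- Fourth-order tensors on `ℝ³`. -/
abbrev Tens4 : Type := Fin 3 → Fin 3 → Fin 3 → Fin 3 → ℝ

/-- 3×3 real matrices. -/
abbrev Mat3 : Type := Matrix (Fin 3) (Fin 3) ℝ

/-- Kronecker delta on `Fin 3`. -/
noncomputable def kdelta (i j : Fin 3) : ℝ := if i = j then 1 else 0

/-- Minor and major index symmetries of an elasticity tensor. -/
def IsEla (C : Tens4) : Prop :=
  ∀ i j k l, C i j k l = C j i k l ∧ C i j k l = C i j l k ∧ C i j k l = C k l i j

/-- Harmonic second-order tensors: symmetric and trace free. -/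
def IsH2 (h : Mat3) : Prop := h.IsSymm ∧ h.trace = 0

/-- Harmonic fourth-order tensors: totally symmetric and trace free. -/
def IsH4 (H : Tens4) : Prop :=
  (∀ (σ : Equiv.Perm (Fin 4)) (f : Fin 4 → Fin 3),
      H (f (σ 0)) (f (σ 1)) (f (σ 2)) (f (σ 3)) = H (f 0) (f 1) (f 2) (f 3)) ∧
  (∀ k l, ∑ i, H i i k l = 0)

/-- Spherical projector `K`. -/
noncomputable def Kt (i j k l : Fin 3) : ℝ := (1/3) * kdelta i j * kdelta k l

/-- Identity tensor `I` on symmetric second order tensors. -/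
noncomputable def It (i j k l : Fin 3) : ℝ :=
  (1/2) * (kdelta i k * kdelta j l + kdelta i l * kdelta j k)

/-- Deviatoric projector `J = I - K`. -/
noncomputable def Jt (i j k l : Fin 3) : ℝ := It i j k l - Kt i j k l

/-- The product `h ⊠ 1` for a harmonic second order tensor `h`. -/
noncomputable def boxOne (h : Mat3) (i j k l : Fin 3) : ℝ :=
  (1/7) * (3 * (h i k * kdelta j l + h i l * kdelta j k + kdelta i k * h j l + kdelta i l * h j k)
    - 4 * (h i j * kdelta k l + kdelta i j * h k l))

/-- The Clebsch–Gordan combination of `(α, β, hᵃ, hᵇ, H)`. -/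
noncomputable def CG (α β : ℝ) (ha hb : Mat3) (H : Tens4) (i j k l : Fin 3) : ℝ :=
  α * Jt i j k l + β * Kt i j k l + boxOne ha i j k l
    + (1/3) * (hb i j * kdelta k l + kdelta i j * hb k l) + H i j k l

/-- The deviatoric part `C^dd = J : C : J` of an elasticity tensor. -/
noncomputable def Cdd (C : Tens4) (i j k l : Fin 3) : ℝ :=
  ∑ p, ∑ q, ∑ r, ∑ s, Jt i j p q * C p q r s * Jt r s k l

/-!
Contracting with `J` replaces a second-order tensor by its symmetric trace-free part. In a
Clebsch–Gordan combination, `α J + (hᵃ ⊠ 1) + H` is symmetric and trace-free in each of its two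
index pairs, so `J : · : J` fixes it, while the remaining terms have the form `u ⊗ δ + δ ⊗ v` and
are annihilated. Hence `C^dd = α J + (hᵃ ⊠ 1) + H`, whose contraction over the first and third
indices is `(5/3) α δ + hᵃ` and yields `α` and `hᵃ`; the contraction of `C` over the last two
indices is `β δ + hᵇ` and yields `β` and `hᵇ`.
-/

theorem kdelta_eq_one_apply (i j : Fin 3) : kdelta i j = (1 : Mat3) i j := by
  simp only [kdelta, Matrix.one_apply]

theorem kdelta_comm (i j : Fin 3) : kdelta i j = kdelta j i := by
  simp only [kdelta, eq_comm]

theorem sum_kdelta_self : ∑ i, kdelta i i = 3 := by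
  simp [kdelta]

theorem sum_kdelta_mul (f : Fin 3 → ℝ) (i : Fin 3) : ∑ j, kdelta i j * f j = f i := by
  simp [kdelta]

theorem sum_kdelta_mul' (f : Fin 3 → ℝ) (i : Fin 3) : ∑ j, kdelta j i * f j = f i := by
  simp [kdelta]

theorem sum_mul_kdelta (f : Fin 3 → ℝ) (i : Fin 3) : ∑ j, f j * kdelta i j = f i := by
  simp [kdelta]

theorem sum_mul_kdelta' (f : Fin 3 → ℝ) (i : Fin 3) : ∑ j, f j * kdelta j i = f i := by
  simp [kdelta]

/-- The symmetric trace-free part of a second-order tensor, i.e. its contraction with `J`. -/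
noncomputable def dev : Mat3 →ₗ[ℝ] Mat3 where
  toFun X := (1 / 2 : ℝ) • (X + X.transpose) - (X.trace / 3) • 1
  map_add' X Y := by
    rw [Matrix.transpose_add, Matrix.trace_add]
    module
  map_smul' c X := by
    rw [Matrix.transpose_smul, Matrix.trace_smul, smul_eq_mul, RingHom.id_apply]
    module

theorem dev_apply (X : Mat3) (i j : Fin 3) :
    dev X i j = 1 / 2 * (X i j + X j i) - X.trace / 3 * kdelta i j := by
  rw [kdelta_eq_one_apply]
  rfl

theorem dev_one : dev 1 = 0 := by
  ext i j
  rw [dev_apply, ← kdelta_eq_one_apply, ← kdelta_eq_one_apply, kdelta_comm j i, Matrix.trace_one,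
    Fintype.card_fin, Matrix.zero_apply]
  ring

theorem Jt_swap_pairs (i j k l : Fin 3) : Jt i j k l = Jt k l i j := by
  rw [Jt, Jt, It, It, Kt, Kt, kdelta_comm i k, kdelta_comm j l, kdelta_comm i l, kdelta_comm j k]
  ring

theorem sum_Jt_mul (X : Fin 3 → Fin 3 → ℝ) (i j : Fin 3) :
    ∑ p, ∑ q, Jt i j p q * X p q = dev (.of X) i j := by
  have sum_It : ∑ p, ∑ q, It i j p q * X p q = 1 / 2 * (X i j + X j i) := by
    simp only [It, mul_assoc, add_mul, ← Finset.mul_sum, Finset.sum_add_distrib, sum_kdelta_mul]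
  have sum_Kt : ∑ p, ∑ q, Kt i j p q * X p q = (∑ p, X p p) / 3 * kdelta i j := by
    simp only [Kt, mul_assoc, ← Finset.mul_sum, sum_kdelta_mul]
    ring
  simp only [Jt, sub_mul, Finset.sum_sub_distrib, sum_It, sum_Kt, dev_apply, Matrix.of_apply,
    Matrix.trace, Matrix.diag_apply]

theorem Cdd_apply (C : Tens4) (i j k l : Fin 3) :
    Cdd C i j k l = dev (.of fun p q ↦ dev (.of (C p q)) k l) i j := by
  rw [Cdd, ← sum_Jt_mul]
  refine Finset.sum_congr rfl fun p _ ↦ Finset.sum_congr rfl fun q _ ↦ ?_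
  simp only [← sum_Jt_mul, Finset.mul_sum]
  refine Finset.sum_congr rfl fun r _ ↦ Finset.sum_congr rfl fun s _ ↦ ?_
  rw [Jt_swap_pairs r s k l]
  ring

namespace IsH2

variable {h h' : Mat3}

theorem of_entries {X : Fin 3 → Fin 3 → ℝ} (symm : ∀ i j, X i j = X j i)
    (sum_diag : ∑ i, X i i = 0) : IsH2 (.of X) :=
  ⟨Matrix.IsSymm.ext fun i j ↦ symm j i, sum_diag⟩

theorem symm (hh : IsH2 h) (i j : Fin 3) : h i j = h j i :=
  hh.1.apply j i

theorem sum_diag (hh : IsH2 h) : ∑ i, h i i = 0 :=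
  hh.2

theorem add (hh : IsH2 h) (hh' : IsH2 h') : IsH2 (h + h') :=
  ⟨hh.1.add hh'.1, by rw [Matrix.trace_add, hh.2, hh'.2, add_zero]⟩

theorem smul (c : ℝ) (hh : IsH2 h) : IsH2 (c • h) :=
  ⟨hh.1.smul c, by rw [Matrix.trace_smul, hh.2, smul_zero]⟩

theorem trace_smul_one_add (c : ℝ) (hh : IsH2 h) : (c • 1 + h).trace = 3 * c := by
  rw [Matrix.trace_add, Matrix.trace_smul, Matrix.trace_one, hh.2, Fintype.card_fin, add_zero,
    smul_eq_mul, mul_comm, Nat.cast_ofNat]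

theorem dev_eq (hh : IsH2 h) : dev h = h := by
  ext i j
  rw [dev_apply, hh.2, hh.symm j i]
  ring

end IsH2

/-- Deviatoric fourth-order tensors: harmonic as second-order tensors in the first index pair and in
the last one. These are the tensors that `J : · : J` fixes. -/
def IsDeviatoric (D : Tens4) : Prop :=
  (∀ k l, IsH2 (.of fun i j ↦ D i j k l)) ∧ ∀ i j, IsH2 (.of (D i j))

/-- The tensor product of two second-order tensors, with components `u_ij v_kl`. The non-deviatoric
terms of a Clebsch–Gordan combination are of the form `u ⊗ δ + δ ⊗ v`. -/
def dyad (u v : Mat3) : Tens4 := fun i j k l ↦ u i j * v k l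

/-- The contraction of a fourth-order tensor over its last two indices, called the dilatation tensor
in elasticity; it carries the components `β` and `hᵇ`. -/
noncomputable def dilatation : Tens4 →ₗ[ℝ] Mat3 where
  toFun C := .of fun i j ↦ ∑ k, C i j k k
  map_add' C C' := by
    ext i j
    simp only [Matrix.of_apply, Matrix.add_apply, Pi.add_apply, Finset.sum_add_distrib]
  map_smul' c C := by
    ext i j
    simp only [Matrix.of_apply, Matrix.smul_apply, Pi.smul_apply, Finset.smul_sum,
      RingHom.id_apply]

/-- The contraction of a fourth-order tensor over its first and third indices, called the Voigt
tensor in elasticity; on the deviatoric part it carries the components `α` and `hᵃ`. -/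
noncomputable def voigt : Tens4 →ₗ[ℝ] Mat3 where
  toFun C := .of fun j l ↦ ∑ i, C i j i l
  map_add' C C' := by
    ext j l
    simp only [Matrix.of_apply, Matrix.add_apply, Pi.add_apply, Finset.sum_add_distrib]
  map_smul' c C := by
    ext j l
    simp only [Matrix.of_apply, Matrix.smul_apply, Pi.smul_apply, Finset.smul_sum,
      RingHom.id_apply]

theorem dilatation_apply (C : Tens4) (i j : Fin 3) : dilatation C i j = ∑ k, C i j k k :=
  rfl

theorem voigt_apply (C : Tens4) (j l : Fin 3) : voigt C j l = ∑ i, C i j i l :=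
  rfl

theorem dilatation_dyad (u v : Mat3) : dilatation (dyad u v) = v.trace • u := by
  ext i j
  simp only [dilatation_apply, dyad, ← Finset.mul_sum, Matrix.smul_apply, smul_eq_mul, Matrix.trace,
    Matrix.diag_apply, mul_comm]

namespace IsDeviatoric

variable {D D' : Tens4}

theorem of_major_symm (major : ∀ i j k l, D i j k l = D k l i j) (hD : ∀ i j, IsH2 (.of (D i j))) :
    IsDeviatoric D :=
  ⟨fun k l ↦ by simpa only [major _ _ k l] using hD k l, hD⟩

theorem add (hD : IsDeviatoric D) (hD' : IsDeviatoric D') : IsDeviatoric (D + D') :=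
  ⟨fun k l ↦ (hD.1 k l).add (hD'.1 k l), fun i j ↦ (hD.2 i j).add (hD'.2 i j)⟩

theorem smul (c : ℝ) (hD : IsDeviatoric D) : IsDeviatoric (c • D) :=
  ⟨fun k l ↦ (hD.1 k l).smul c, fun i j ↦ (hD.2 i j).smul c⟩

theorem dilatation_eq_zero (hD : IsDeviatoric D) : dilatation D = 0 := by
  ext i j
  exact (hD.2 i j).sum_diag

theorem Cdd_add_dyad (hD : IsDeviatoric D) (u v : Mat3) :
    Cdd (D + (dyad u 1 + dyad 1 v)) = D := by
  have dev_last (p q k l : Fin 3) :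
      dev (.of ((D + (dyad u 1 + dyad 1 v)) p q)) k l =
        D p q k l + dev v k l * (1 : Mat3) p q := by
    have slice : Matrix.of ((D + (dyad u 1 + dyad 1 v)) p q) =
        Matrix.of (D p q) + (u p q • 1 + (1 : Mat3) p q • v) := rfl
    rw [slice, map_add, map_add, map_smul, map_smul, dev_one, (hD.2 p q).dev_eq, smul_zero,
      zero_add, mul_comm]
    rfl
  ext i j k l
  have slice : Matrix.of (fun p q ↦ D p q k l + dev v k l * (1 : Mat3) p q) =
      Matrix.of (fun p q ↦ D p q k l) + dev v k l • (1 : Mat3) := rfl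
  simp only [Cdd_apply, dev_last]
  rw [slice, map_add, map_smul, dev_one, smul_zero, add_zero, (hD.1 k l).dev_eq, Matrix.of_apply]

theorem sum_mul_Jt (hD : IsDeviatoric D) :
    ∑ i, ∑ j, ∑ k, ∑ l, D i j k l * Jt i j k l = (voigt D).trace :=
  calc ∑ i, ∑ j, ∑ k, ∑ l, D i j k l * Jt i j k l
      = ∑ i, ∑ j, ∑ k, ∑ l, Jt i j k l * D i j k l := by simp only [mul_comm]
    _ = ∑ i, ∑ j, D i j i j := by simp only [sum_Jt_mul, (hD.2 _ _).dev_eq, Matrix.of_apply]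
    _ = ∑ j, ∑ i, D i j i j := Finset.sum_comm

end IsDeviatoric

theorem isDeviatoric_Jt : IsDeviatoric Jt := by
  refine .of_major_symm Jt_swap_pairs fun i j ↦ .of_entries (fun k l ↦ ?_) ?_
  · rw [Jt, Jt, It, It, Kt, Kt, kdelta_comm k l]
    ring
  · simp only [Jt, It, Kt, ← Finset.mul_sum, Finset.sum_add_distrib, Finset.sum_sub_distrib,
      sum_kdelta_mul, sum_kdelta_self, kdelta_comm j i]
    ring

theorem isDeviatoric_boxOne {h : Mat3} (hh : IsH2 h) : IsDeviatoric (boxOne h) := by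
  refine .of_major_symm (fun i j k l ↦ ?_) fun i j ↦ .of_entries (fun k l ↦ ?_) ?_
  · rw [boxOne, boxOne, hh.symm k i, hh.symm k j, hh.symm l i, hh.symm l j, kdelta_comm k i,
      kdelta_comm k j, kdelta_comm l i, kdelta_comm l j]
    ring
  · rw [boxOne, boxOne, hh.symm k l, kdelta_comm k l]
    ring
  · simp only [boxOne, ← Finset.mul_sum, Finset.sum_add_distrib, Finset.sum_sub_distrib,
      sum_kdelta_mul, sum_mul_kdelta, sum_kdelta_self, hh.sum_diag, hh.symm j i]
    ring

namespace IsH4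

variable {H : Tens4}

theorem swap_last (hH : IsH4 H) (i j k l : Fin 3) : H i j k l = H i j l k := by
  simpa [Equiv.swap_apply_def] using hH.1 (Equiv.swap 2 3) ![i, j, l, k]

theorem swap_middle (hH : IsH4 H) (i j k l : Fin 3) : H i j k l = H i k j l := by
  simpa [Equiv.swap_apply_def] using hH.1 (Equiv.swap 1 2) ![i, k, j, l]

theorem swap_pairs (hH : IsH4 H) (i j k l : Fin 3) : H i j k l = H k l i j :=
  hH.1 (Equiv.addRight 2) ![k, l, i, j]

theorem isDeviatoric (hH : IsH4 H) : IsDeviatoric H :=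
  .of_major_symm hH.swap_pairs fun i j ↦
    .of_entries (hH.swap_last i j) (by simpa only [hH.swap_pairs i j] using hH.2 i j)

theorem voigt_eq_zero (hH : IsH4 H) : voigt H = 0 := by
  ext j l
  simpa only [voigt_apply, hH.swap_middle _ j _ l] using! hH.2 j l

end IsH4

theorem voigt_Jt : voigt Jt = (5 / 3 : ℝ) • 1 := by
  ext j l
  rw [voigt_apply, Matrix.smul_apply, ← kdelta_eq_one_apply, smul_eq_mul]
  simp only [Jt, It, Kt, mul_assoc, ← Finset.mul_sum, ← Finset.sum_mul, Finset.sum_add_distrib,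
    Finset.sum_sub_distrib, sum_kdelta_mul', sum_kdelta_self]
  ring

theorem voigt_boxOne {h : Mat3} (hh : IsH2 h) : voigt (boxOne h) = h := by
  ext j l
  simp only [voigt_apply, boxOne, ← Finset.mul_sum, ← Finset.sum_mul, Finset.sum_add_distrib,
    Finset.sum_sub_distrib, sum_kdelta_mul', sum_mul_kdelta, sum_mul_kdelta', sum_kdelta_self,
    hh.sum_diag, hh.symm l j]
  ring

section ClebschGordan

variable {ha hb : Mat3} {H : Tens4}

theorem CG_eq_add_dyad (α β : ℝ) (ha hb : Mat3) (H : Tens4) :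
    CG α β ha hb H = α • Jt + boxOne ha + H +
      (dyad ((β / 3) • 1 + (1 / 3 : ℝ) • hb) 1 + dyad 1 ((1 / 3 : ℝ) • hb)) := by
  ext i j k l
  simp only [CG, Kt, dyad, kdelta_eq_one_apply, Pi.add_apply, Pi.smul_apply, Matrix.add_apply,
    Matrix.smul_apply, smul_eq_mul]
  ring

theorem isDeviatoric_smul_Jt_add_boxOne_add (α : ℝ) (hha : IsH2 ha) (hH : IsH4 H) :
    IsDeviatoric (α • Jt + boxOne ha + H) :=
  ((isDeviatoric_Jt.smul α).add (isDeviatoric_boxOne hha)).add hH.isDeviatoric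

theorem Cdd_CG (α β : ℝ) (hha : IsH2 ha) (hb : Mat3) (hH : IsH4 H) :
    Cdd (CG α β ha hb H) = α • Jt + boxOne ha + H := by
  rw [CG_eq_add_dyad]
  exact (isDeviatoric_smul_Jt_add_boxOne_add α hha hH).Cdd_add_dyad _ _

theorem sum_Cdd_CG_mul_Jt (α β : ℝ) (hha : IsH2 ha) (hb : Mat3) (hH : IsH4 H) :
    ∑ i, ∑ j, ∑ k, ∑ l, Cdd (CG α β ha hb H) i j k l * Jt i j k l =
      (voigt (Cdd (CG α β ha hb H))).trace := by
  rw [Cdd_CG α β hha hb hH]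
  exact (isDeviatoric_smul_Jt_add_boxOne_add α hha hH).sum_mul_Jt

theorem dilatation_CG (α β : ℝ) (hha : IsH2 ha) (hhb : IsH2 hb) (hH : IsH4 H) :
    dilatation (CG α β ha hb H) = β • 1 + hb := by
  rw [CG_eq_add_dyad, map_add, map_add _ (dyad _ _), dilatation_dyad, dilatation_dyad,
    (isDeviatoric_smul_Jt_add_boxOne_add α hha hH).dilatation_eq_zero, Matrix.trace_smul, hhb.2,
    Matrix.trace_one, Fintype.card_fin]
  module

theorem voigt_Cdd_CG (α β : ℝ) (hha : IsH2 ha) (hb : Mat3) (hH : IsH4 H) :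
    voigt (Cdd (CG α β ha hb H)) = (5 / 3 * α) • 1 + ha := by
  rw [Cdd_CG α β hha hb hH, map_add, map_add, map_smul, voigt_Jt, voigt_boxOne hha,
    hH.voigt_eq_zero]
  module

theorem trace_dilatation_CG (α β : ℝ) (hha : IsH2 ha) (hhb : IsH2 hb) (hH : IsH4 H) :
    (dilatation (CG α β ha hb H)).trace = 3 * β := by
  rw [dilatation_CG α β hha hhb hH, hhb.trace_smul_one_add]

theorem trace_voigt_Cdd_CG (α β : ℝ) (hha : IsH2 ha) (hb : Mat3) (hH : IsH4 H) :
    (voigt (Cdd (CG α β ha hb H))).trace = 5 * α := by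
  rw [voigt_Cdd_CG α β hha hb hH, hha.trace_smul_one_add]
  ring

end ClebschGordan

/-- Recovery formulas for the Clebsch–Gordan harmonic decomposition. -/
theorem cg_recovery (C : Tens4) (hC : IsEla C) (α β : ℝ) (ha hb : Mat3) (H : Tens4)
    (hha : IsH2 ha) (hhb : IsH2 hb) (hH : IsH4 H)
    (hdec : ∀ i j k l, C i j k l = CG α β ha hb H i j k l) :
    α = (1/5) * ∑ i, ∑ j, ∑ k, ∑ l, Cdd C i j k l * Jt i j k l ∧
    β = (1/3) * ∑ i, ∑ k, C i i k k ∧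
    (∀ j l, ha j l = (∑ i, Cdd C i j i l) - (1/3) * kdelta j l * ∑ i, ∑ p, Cdd C i p i p) ∧
    (∀ i j, hb i j = (∑ k, C i j k k) - (1/3) * kdelta i j * ∑ p, ∑ k, C p p k k) ∧
    (∀ i j k l, H i j k l = Cdd C i j k l - boxOne ha i j k l - α * Jt i j k l) := by
  obtain rfl : C = CG α β ha hb H := by
    ext i j k l
    exact hdec i j k l
  have dilatation_eq (i j : Fin 3) : ∑ k, CG α β ha hb H i j k k = β * kdelta i j + hb i j := by
    rw [← dilatation_apply, dilatation_CG α β hha hhb hH, kdelta_eq_one_apply]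
    rfl
  have voigt_eq (j l : Fin 3) :
      ∑ i, Cdd (CG α β ha hb H) i j i l = 5 / 3 * α * kdelta j l + ha j l := by
    rw [← voigt_apply, voigt_Cdd_CG α β hha hb hH, kdelta_eq_one_apply]
    rfl
  have trace_dilatation : ∑ p, ∑ k, CG α β ha hb H p p k k = 3 * β :=
    trace_dilatation_CG α β hha hhb hH
  have trace_voigt : ∑ i, ∑ p, Cdd (CG α β ha hb H) i p i p = 5 * α :=
    Finset.sum_comm.trans (trace_voigt_Cdd_CG α β hha hb hH)
  rw [sum_Cdd_CG_mul_Jt α β hha hb hH, trace_voigt_Cdd_CG α β hha hb hH, trace_dilatation,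
    trace_voigt]
  refine ⟨by ring, by ring, fun j l ↦ ?_, fun i j ↦ ?_, fun i j k l ↦ ?_⟩
  · linear_combination -voigt_eq j l
  · linear_combination -dilatation_eq i j
  · rw [Cdd_CG α β hha hb hH]
    simp only [Pi.add_apply, Pi.smul_apply, smul_eq_mul]
    ring
end

section
/- Schur–Weyl splitting of an elasticity tensor: for every C ∈ Ela, the tensor C^s with components C^s_ijkl = (1/3)(C_ijkl + C_ikjl + C_iljk) is totally symmetric (invariant under every permutation of the four indices); moreover, the splitting is orthogonal: for all C, D ∈ Ela one has ∑_{i,j,k,l} C^s_ijkl · (D_ijkl − D^s_ijkl) = 0, where D^s_ijkl = (1/3)(D_ijkl + D_ikjl + D_iljk). -/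
open scoped BigOperators

/-- The totally symmetric part `C^s` of an elasticity tensor. -/
noncomputable def Csym (C : Tens4) (i j k l : Fin 3) : ℝ :=
  (1/3) * (C i j k l + C i k j l + C i l j k)

/-!
The minor and major symmetries make `C^s` invariant under the three adjacent transpositions of its
indices, and these generate the symmetric group. Relabelling the summation indices turns the pairing
of a tensor `S`, symmetric in its last three indices, with each of the three terms of `D^s` into a
third of its pairing with `D`; hence `S` is orthogonal to `D - D^s`, whatever the tensor `D`.
-/

theorem apply_comp_perm_of_adjacent_swap {α β : Type*} {n : ℕ} {T : (Fin (n + 1) → α) → β}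
    (hT : ∀ (i : Fin n) f, T (f ∘ Equiv.swap i.castSucc i.succ) = T f)
    (σ : Equiv.Perm (Fin (n + 1))) (f : Fin (n + 1) → α) : T (f ∘ σ) = T f := by
  have hσ : σ ∈ Submonoid.closure (Set.range fun i : Fin n ↦ Equiv.swap i.castSucc i.succ) := by
    simp only [Equiv.Perm.mclosure_swap_castSucc_succ, Submonoid.mem_top]
  induction hσ using Submonoid.closure_induction generalizing f with
  | mem _ hτ =>
    obtain ⟨i, rfl⟩ := hτ
    exact hT i f
  | one => rfl
  | mul σ τ _ _ ihσ ihτ => exact (ihτ (f ∘ σ)).trans (ihσ f)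

theorem apply_perm_of_adjacent_swap {α β : Type*} {T : α → α → α → α → β}
    (h₀₁ : ∀ i j k l, T j i k l = T i j k l) (h₁₂ : ∀ i j k l, T i k j l = T i j k l)
    (h₂₃ : ∀ i j k l, T i j l k = T i j k l) (σ : Equiv.Perm (Fin 4)) (f : Fin 4 → α) :
    T (f (σ 0)) (f (σ 1)) (f (σ 2)) (f (σ 3)) = T (f 0) (f 1) (f 2) (f 3) := by
  refine apply_comp_perm_of_adjacent_swap (T := fun f ↦ T (f 0) (f 1) (f 2) (f 3))
    (fun i f ↦ ?_) σ f
  fin_cases i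
  · exact h₀₁ ..
  · exact h₁₂ ..
  · exact h₂₃ ..

section Pairing

variable {ι R : Type*} [Fintype ι] [AddCommMonoid R] [Mul R] {S : ι → ι → ι → R}

theorem sum_mul_swap_eq_sum_mul (hS : ∀ j k l, S k j l = S j k l) (D : ι → ι → ι → R) :
    ∑ j, ∑ k, ∑ l, S j k l * D k j l = ∑ j, ∑ k, ∑ l, S j k l * D j k l :=
  calc
    _ = ∑ j, ∑ k, ∑ l, S k j l * D k j l := by simp only [hS]
    _ = _ := Finset.sum_comm

theorem sum_mul_rotate_eq_sum_mul (hS : ∀ j k l, S l j k = S j k l) (D : ι → ι → ι → R) :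
    ∑ j, ∑ k, ∑ l, S j k l * D l j k = ∑ j, ∑ k, ∑ l, S j k l * D j k l :=
  calc
    _ = ∑ j, ∑ k, ∑ l, S l j k * D l j k := by simp only [hS]
    _ = _ := Finset.sum_comm_cycle

end Pairing

section SymPart

variable {ι K : Type*} [Field K]

/-- The average `C^s` of a fourth-order tensor `C` over the three ways of pairing its indices, with
indices in any type and entries in any field; on `Tens4` it unfolds to `Csym`. It is meant for
tensors with the symmetries of elasticity, for which it is the totally symmetric part; in
characteristic `3` it is the junk value `0`. -/
def symPart (C : ι → ι → ι → ι → K) (i j k l : ι) : K :=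
  (1 / 3) * (C i j k l + C i k j l + C i l j k)

variable {C : ι → ι → ι → ι → K}

theorem symPart_swap₀₁ (hminor : ∀ i j k l, C i j l k = C i j k l)
    (hmajor : ∀ i j k l, C k l i j = C i j k l) (i j k l : ι) :
    symPart C j i k l = symPart C i j k l := by
  have hleft : C j i k l = C i j k l := by rw [← hmajor, hminor, hmajor]
  rw [symPart, symPart, hleft, hmajor i l j k, hmajor i k j l]
  ring

theorem symPart_swap₁₂ (hminor : ∀ i j k l, C i j l k = C i j k l) (i j k l : ι) :
    symPart C i k j l = symPart C i j k l := by
  rw [symPart, symPart, hminor i l j k]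
  ring

theorem symPart_swap₂₃ (hminor : ∀ i j k l, C i j l k = C i j k l) (i j k l : ι) :
    symPart C i j l k = symPart C i j k l := by
  rw [symPart, symPart, hminor i j k l]
  ring

theorem sum_mul_sub_symPart_eq_zero [Fintype ι] (h3 : (3 : K) ≠ 0) {S : ι → ι → ι → ι → K}
    (h₁₂ : ∀ i j k l, S i k j l = S i j k l) (h₂₃ : ∀ i j k l, S i j l k = S i j k l)
    (D : ι → ι → ι → ι → K) :
    ∑ i, ∑ j, ∑ k, ∑ l, S i j k l * (D i j k l - symPart D i j k l) = 0 := by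
  refine Finset.sum_eq_zero fun i _ ↦ ?_
  have hswap := sum_mul_swap_eq_sum_mul (h₁₂ i) (D i)
  have hrotate := sum_mul_rotate_eq_sum_mul (S := S i) (fun j k l ↦ by rw [h₁₂, h₂₃]) (D i)
  simp only [symPart, mul_sub, mul_add, mul_left_comm _ (1 / 3 : K), Finset.sum_sub_distrib,
    Finset.sum_add_distrib, ← Finset.mul_sum, hswap, hrotate]
  field_simp
  ring

theorem schurWeyl_splitting_general [Fintype ι] (h3 : (3 : K) ≠ 0)
    (hminor : ∀ i j k l, C i j l k = C i j k l) (hmajor : ∀ i j k l, C k l i j = C i j k l) :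
    (∀ (σ : Equiv.Perm (Fin 4)) (f : Fin 4 → ι),
        symPart C (f (σ 0)) (f (σ 1)) (f (σ 2)) (f (σ 3)) =
          symPart C (f 0) (f 1) (f 2) (f 3)) ∧
    (∀ D : ι → ι → ι → ι → K,
        ∑ i, ∑ j, ∑ k, ∑ l, symPart C i j k l * (D i j k l - symPart D i j k l) = 0) :=
  ⟨apply_perm_of_adjacent_swap (symPart_swap₀₁ hminor hmajor) (symPart_swap₁₂ hminor)
      (symPart_swap₂₃ hminor),
    sum_mul_sub_symPart_eq_zero h3 (symPart_swap₁₂ hminor) (symPart_swap₂₃ hminor)⟩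

end SymPart

/-- Schur–Weyl splitting of an elasticity tensor: `C^s` is totally symmetric, and the
splitting `C = C^s + (C - C^s)` is orthogonal. -/
theorem schurWeyl_splitting (C : Tens4) (hC : IsEla C) :
    (∀ (σ : Equiv.Perm (Fin 4)) (f : Fin 4 → Fin 3),
        Csym C (f (σ 0)) (f (σ 1)) (f (σ 2)) (f (σ 3)) = Csym C (f 0) (f 1) (f 2) (f 3)) ∧
    (∀ D : Tens4, IsEla D →
        ∑ i, ∑ j, ∑ k, ∑ l, Csym C i j k l * (D i j k l - Csym D i j k l) = 0) := by
  have ⟨hsymm, horth⟩ := schurWeyl_splitting_general three_ne_zero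
    (fun i j k l ↦ (hC i j k l).2.1.symm) (fun i j k l ↦ (hC i j k l).2.2.symm)
  exact ⟨hsymm, fun D _ ↦ horth D⟩
end

section
/- Proportionality of transversely isotropic deviators sharing a transversely isotropic pair (key step of Theorem 5): let n, m, k ∈ ℝ³ be unit vectors, let α, β ∈ ℝ with α ≠ 0 and β ≠ 0, and set hᵃ = α(n nᵀ − (1/3)·1), hᵇ = β(m mᵀ − (1/3)·1). If every R ∈ SO(3) with R k = k satisfies both R hᵃ Rᵀ = hᵃ and R hᵇ Rᵀ = hᵇ, then m = n or m = −n; in particular hᵇ = (β/α) · hᵃ. -/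
open scoped BigOperators
open Matrix

/-- A rotation matrix: `RᵀR = 1` and `det R = 1`. -/
def IsSO3 (R : Mat3) : Prop := Rᵀ * R = 1 ∧ R.det = 1

/-- The rank-one deviator `n nᵀ - (1/3)·1` associated with a vector `n`. -/
noncomputable def devRank1 (n : Fin 3 → ℝ) : Mat3 :=
  Matrix.vecMulVec n n - (1/3 : ℝ) • 1

/-!
Conjugation by a rotation `R` sends the deviator of `n` to that of `R n`, and a deviator determines
its vector up to sign, so an invariant deviator has `R n = ± n`. Hence `R²` fixes both `n` and the
axis `k`; a rotation fixing two independent vectors is the identity, so `n` lies on the axis as soon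
as `R² ≠ 1`. One rotation about `k` by a quarter turn therefore puts both `n` and `m` on the line
of `k`.
-/

theorem vecMulVec_self_eq_vecMulVec_self_iff {ι A : Type*} [CommRing A] [NoZeroDivisors A]
    {v w : ι → A} : vecMulVec v v = vecMulVec w w ↔ v = w ∨ v = -w := by
  refine ⟨fun h => ?_, ?_⟩
  · have hmul (i j : ι) : v i * v j = w i * w j := congrFun₂ h i j
    by_cases hw : w = 0
    · subst hw
      exact .inl <| funext fun i => mul_self_eq_zero.mp <| by simpa using hmul i i
    · obtain ⟨i, hi⟩ := Function.ne_iff.mp hw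
      rcases mul_self_eq_mul_self_iff.mp (hmul i i) with hvi | hvi
      · refine .inl <| funext fun j => mul_left_cancel₀ hi ?_
        rw [← hmul, hvi]
      · refine .inr <| funext fun j => mul_left_cancel₀ hi ?_
        rw [Pi.neg_apply, mul_neg, ← hmul, hvi, neg_mul, neg_neg]
  · rintro (rfl | rfl)
    · rfl
    · rw [neg_vecMulVec, vecMulVec_neg, neg_neg]

section CommRing

variable {A : Type*} [CommRing A]

theorem transpose_mulVec_cross_mulVec (M : Matrix (Fin 3) (Fin 3) A) (u v : Fin 3 → A) :
    Mᵀ *ᵥ ((M *ᵥ u) ⨯₃ (M *ᵥ v)) = M.det • (u ⨯₃ v) := by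
  refine dotProduct_eq _ _ fun x => ?_
  have hrows : of ![M *ᵥ x, M *ᵥ u, M *ᵥ v] = of ![x, u, v] * Mᵀ := by
    ext i j
    fin_cases i <;> simp [mul_apply, mulVec, dotProduct, mul_comm]
  calc Mᵀ *ᵥ ((M *ᵥ u) ⨯₃ (M *ᵥ v)) ⬝ᵥ x
      = (M *ᵥ x) ⬝ᵥ (M *ᵥ u) ⨯₃ (M *ᵥ v) := by
        rw [mulVec_transpose, ← dotProduct_mulVec, dotProduct_comm]
    _ = (of ![M *ᵥ x, M *ᵥ u, M *ᵥ v]).det := triple_product_eq_det _ _ _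
    _ = M.det * (of ![x, u, v]).det := by rw [hrows, det_mul, det_transpose, mul_comm]
    _ = M.det * (x ⬝ᵥ u ⨯₃ v) := congrArg _ (triple_product_eq_det x u v).symm
    _ = M.det • (u ⨯₃ v) ⬝ᵥ x := by rw [smul_dotProduct, smul_eq_mul, dotProduct_comm x]

theorem mulVec_cross {R : Matrix (Fin 3) (Fin 3) A} (horth : Rᵀ * R = 1) (hdet : R.det = 1)
    (u v : Fin 3 → A) : R *ᵥ (u ⨯₃ v) = (R *ᵥ u) ⨯₃ (R *ᵥ v) := by
  rw [← one_smul A (u ⨯₃ v), ← hdet, ← transpose_mulVec_cross_mulVec, mulVec_mulVec,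
    mul_eq_one_comm.mp horth, one_mulVec]

/-- The rotation `v ↦ (k ⬝ v) k + k × v` by a quarter turn about the axis `k`, given by Rodrigues'
formula; it is a rotation only when `k` is a unit vector. -/
def quarterTurn (k : Fin 3 → A) : Matrix (Fin 3) (Fin 3) A :=
  vecMulVec k k + LinearMap.toMatrix' (crossProduct k)

theorem quarterTurn_mulVec (k v : Fin 3 → A) :
    quarterTurn k *ᵥ v = (k ⬝ᵥ v) • k + k ⨯₃ v := by
  rw [quarterTurn, add_mulVec, vecMulVec_mulVec, op_smul_eq_smul, LinearMap.toMatrix'_mulVec]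

theorem det_quarterTurn (k : Fin 3 → A) : (quarterTurn k).det = (k ⬝ᵥ k) ^ 2 := by
  have hentries : quarterTurn k =
      !![k 0 * k 0, k 0 * k 1 - k 2, k 0 * k 2 + k 1;
         k 1 * k 0 + k 2, k 1 * k 1, k 1 * k 2 - k 0;
         k 2 * k 0 - k 1, k 2 * k 1 + k 0, k 2 * k 2] := by
    ext i j
    fin_cases i <;> fin_cases j <;>
      simp [quarterTurn, vecMulVec_apply, LinearMap.toMatrix'_apply, cross_apply, sub_eq_add_neg]
  rw [hentries, det_fin_three, vec3_dotProduct]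
  simp only [of_apply, cons_val]
  ring

variable {k : Fin 3 → A}

theorem quarterTurn_mulVec_self (hk : k ⬝ᵥ k = 1) : quarterTurn k *ᵥ k = k := by
  rw [quarterTurn_mulVec, hk, one_smul, cross_self, add_zero]

theorem quarterTurn_mulVec_dotProduct_mulVec (hk : k ⬝ᵥ k = 1) (v w : Fin 3 → A) :
    (quarterTurn k *ᵥ v) ⬝ᵥ (quarterTurn k *ᵥ w) = v ⬝ᵥ w := by
  simp only [quarterTurn_mulVec, add_dotProduct, dotProduct_add, smul_dotProduct, dotProduct_smul,
    smul_eq_mul, cross_dot_cross, dot_self_cross, dotProduct_comm _ k, hk]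
  ring

theorem quarterTurn_transpose_mul_self (hk : k ⬝ᵥ k = 1) :
    (quarterTurn k)ᵀ * quarterTurn k = 1 := by
  refine ext_iff_mulVec.mpr fun v => dotProduct_eq _ _ fun w => ?_
  rw [← mulVec_mulVec, mulVec_transpose, ← dotProduct_mulVec,
    quarterTurn_mulVec_dotProduct_mulVec hk, one_mulVec]

theorem quarterTurn_mul_self (hk : k ⬝ᵥ k = 1) :
    quarterTurn k * quarterTurn k = (2 : A) • vecMulVec k k - 1 := by
  refine ext_iff_mulVec.mpr fun v => ?_
  rw [← mulVec_mulVec, quarterTurn_mulVec k v, mulVec_add, mulVec_smul, quarterTurn_mulVec_self hk,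
    quarterTurn_mulVec, dot_self_cross, zero_smul, zero_add, cross_cross_eq_smul_sub_smul', hk,
    one_smul, sub_mulVec, smul_mulVec, vecMulVec_mulVec, op_smul_eq_smul, one_mulVec, two_smul,
    add_sub_assoc]

theorem quarterTurn_mul_self_ne_one [CharZero A] (hk : k ⬝ᵥ k = 1) :
    quarterTurn k * quarterTurn k ≠ 1 := by
  intro h
  have htrace := congrArg trace ((quarterTurn_mul_self hk).symm.trans h)
  rw [trace_sub, trace_smul, trace_vecMulVec, hk, trace_one, Fintype.card_fin] at htrace
  norm_num at htrace

end CommRing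

section LinearOrderedField

variable {𝕜 : Type*} [Field 𝕜] [LinearOrder 𝕜] [IsStrictOrderedRing 𝕜]

theorem eq_one_of_mulVec_eq_of_cross_ne_zero {R : Matrix (Fin 3) (Fin 3) 𝕜}
    (horth : Rᵀ * R = 1) (hdet : R.det = 1) {u v : Fin 3 → 𝕜}
    (hu : R *ᵥ u = u) (hv : R *ᵥ v = v) (huv : u ⨯₃ v ≠ 0) : R = 1 := by
  have hcross : R *ᵥ (u ⨯₃ v) = u ⨯₃ v := by rw [mulVec_cross horth hdet, hu, hv]
  let basis : Matrix (Fin 3) (Fin 3) 𝕜 := ![u ⨯₃ v, u, v]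
  have hbasis : IsUnit basisᵀ := by
    rw [isUnit_iff_isUnit_det, det_transpose, ← triple_product_eq_det, isUnit_iff_ne_zero]
    exact dotProduct_self_eq_zero.not.mpr huv
  refine hbasis.mul_right_cancel ?_
  rw [one_mul]
  ext i j
  fin_cases j
  exacts [congrFun hcross i, congrFun hu i, congrFun hv i]

theorem cross_eq_zero_of_mulVec_eq_or_eq_neg {R : Matrix (Fin 3) (Fin 3) 𝕜}
    (horth : Rᵀ * R = 1) (hdet : R.det = 1) (hsq : R * R ≠ 1) {k n : Fin 3 → 𝕜}
    (hk : R *ᵥ k = k) (hn : R *ᵥ n = n ∨ R *ᵥ n = -n) : k ⨯₃ n = 0 := by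
  by_contra hkn
  have horth_sq : (R * R)ᵀ * (R * R) = 1 := by
    rw [transpose_mul, Matrix.mul_assoc, ← Matrix.mul_assoc Rᵀ R R, horth, one_mul, horth]
  have hdet_sq : (R * R).det = 1 := by rw [det_mul, hdet, one_mul]
  have hk_sq : (R * R) *ᵥ k = k := by rw [← mulVec_mulVec, hk, hk]
  have hn_sq : (R * R) *ᵥ n = n := by
    rcases hn with hn | hn <;> simp [← mulVec_mulVec, hn, mulVec_neg]
  exact hsq (eq_one_of_mulVec_eq_of_cross_ne_zero horth_sq hdet_sq hk_sq hn_sq hkn)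

theorem eq_or_eq_neg_of_cross_eq_zero {k n m : Fin 3 → 𝕜} (hk : k ≠ 0)
    (hkn : k ⨯₃ n = 0) (hkm : k ⨯₃ m = 0) (hnm : n ⬝ᵥ n = m ⬝ᵥ m) : m = n ∨ m = -n := by
  have exists_smul_eq {v : Fin 3 → 𝕜} (hkv : k ⨯₃ v = 0) : ∃ a : 𝕜, a • k = v := by
    simpa [LinearIndependent.pair_iff' hk] using
      crossProduct_ne_zero_iff_linearIndependent.not.mp (not_not.mpr hkv)
  obtain ⟨a, rfl⟩ := exists_smul_eq hkn
  obtain ⟨b, rfl⟩ := exists_smul_eq hkm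
  have hab : b * b = a * a := by
    refine mul_right_cancel₀ (dotProduct_self_eq_zero.not.mpr hk) ?_
    simpa [mul_assoc] using hnm.symm
  rcases mul_self_eq_mul_self_iff.mp hab with rfl | rfl
  · exact .inl rfl
  · exact .inr (neg_smul a k)

end LinearOrderedField

theorem isSO3_quarterTurn {k : Fin 3 → ℝ} (hk : k ⬝ᵥ k = 1) : IsSO3 (quarterTurn k) :=
  ⟨quarterTurn_transpose_mul_self hk, by rw [det_quarterTurn, hk, one_pow]⟩

theorem devRank1_eq_devRank1_iff {n m : Fin 3 → ℝ} :
    devRank1 n = devRank1 m ↔ n = m ∨ n = -m :=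
  sub_left_inj.trans vecMulVec_self_eq_vecMulVec_self_iff

theorem mul_devRank1_mul_transpose {R : Mat3} (horth : Rᵀ * R = 1) (n : Fin 3 → ℝ) :
    R * devRank1 n * Rᵀ = devRank1 (R *ᵥ n) := by
  simp only [devRank1, Matrix.mul_sub, Matrix.sub_mul, mul_vecMulVec, vecMulVec_mul,
    vecMul_transpose, Matrix.mul_smul, Matrix.smul_mul, Matrix.mul_one, mul_eq_one_comm.mp horth]

theorem mulVec_eq_or_eq_neg_of_smul_devRank1_invariant {R : Mat3} (horth : Rᵀ * R = 1)
    {n : Fin 3 → ℝ} {α : ℝ} (hα : α ≠ 0)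
    (hinv : R * (α • devRank1 n) * Rᵀ = α • devRank1 n) : R *ᵥ n = n ∨ R *ᵥ n = -n := by
  rw [Matrix.mul_smul, Matrix.smul_mul, mul_devRank1_mul_transpose horth] at hinv
  exact devRank1_eq_devRank1_iff.mp (smul_right_injective _ hα hinv)

theorem ti_deviators_proportional_general {n m k : Fin 3 → ℝ} (hnm : n ⬝ᵥ n = m ⬝ᵥ m)
    (hk : k ≠ 0) {α β : ℝ} (hα : α ≠ 0) (hβ : β ≠ 0)
    {R : Mat3} (hR : IsSO3 R) (hsq : R * R ≠ 1) (hRk : R *ᵥ k = k)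
    (hn : R * (α • devRank1 n) * Rᵀ = α • devRank1 n)
    (hm : R * (β • devRank1 m) * Rᵀ = β • devRank1 m) :
    (m = n ∨ m = -n) ∧ β • devRank1 m = (β / α) • (α • devRank1 n) := by
  obtain ⟨horth, hdet⟩ := hR
  have hkn : k ⨯₃ n = 0 := cross_eq_zero_of_mulVec_eq_or_eq_neg horth hdet hsq hRk
    (mulVec_eq_or_eq_neg_of_smul_devRank1_invariant horth hα hn)
  have hkm : k ⨯₃ m = 0 := cross_eq_zero_of_mulVec_eq_or_eq_neg horth hdet hsq hRk
    (mulVec_eq_or_eq_neg_of_smul_devRank1_invariant horth hβ hm)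
  have hmn : m = n ∨ m = -n := eq_or_eq_neg_of_cross_eq_zero hk hkn hkm hnm
  refine ⟨hmn, ?_⟩
  rw [devRank1_eq_devRank1_iff.mpr hmn, smul_smul, div_mul_cancel₀ β hα]

/-- Proportionality of transversely isotropic deviators sharing a transversely
isotropic pair: the key step of Theorem 5. -/
theorem ti_deviators_proportional (n m k : Fin 3 → ℝ)
    (hn : ∑ i, n i ^ 2 = 1) (hm : ∑ i, m i ^ 2 = 1) (hk : ∑ i, k i ^ 2 = 1)
    (α β : ℝ) (hα : α ≠ 0) (hβ : β ≠ 0)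
    (hfix : ∀ R : Mat3, IsSO3 R → R.mulVec k = k →
      R * (α • devRank1 n) * Rᵀ = α • devRank1 n ∧
      R * (β • devRank1 m) * Rᵀ = β • devRank1 m) :
    (m = n ∨ m = -n) ∧ β • devRank1 m = (β / α) • (α • devRank1 n) := by
  simp only [sq] at hn hm hk
  have hQ := isSO3_quarterTurn hk
  have hQk := quarterTurn_mulVec_self hk
  obtain ⟨hQn, hQm⟩ := hfix _ hQ hQk
  exact ti_deviators_proportional_general (hn.trans hm.symm) (by rintro rfl; simp at hk) hα hβ hQ
    (quarterTurn_mul_self_ne_one hk) hQk hQn hQm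
end
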